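/- Let 1 ≤ a ≤ r and let γ ∈ R^+ satisfy ⟨α, γ^∨⟩ = 0 for all α ∈ Δ_P \ {α_a}. Then for any w ∈ W one has gr_{a−1}(ws_γ) = gr_{a−1}(w) and gr_r(ws_γ) ≤ gr_r(w) + Σ_{k=a}^r a·e_k (lexicographic order on Z^r). -/

import Mathlib

/-!
The key point is that the components of the grading are inversion counts: for `k ≤ r`, the length
`ℓ(v_k)` is the number of positive roots `β`, supported on `α_1, …, α_k` and involving `α_k`
(the `k`-th layer), with `w β < 0` (`RootSystemData.len_eq_card_layer`).  Indeed `ℓ(v_k)` is the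
number of inversions of `v_k`; these all lie in the `k`-th layer; the product `v_{k-1} ⋯ v_1`
permutes that layer; and `v_{r+1} ⋯ v_{k+1}` preserves signs of roots supported on
`α_1, …, α_k`.

By hypothesis `s_γ` fixes every root supported on `Δ_P` whose coefficient at `α_a` vanishes.  For
`k < a` this is the whole `k`-th layer, so `ℓ(v_k)` is unchanged.  For `a ≤ k ≤ r` the `k`-th layer
consists of the roots `α_p + ⋯ + α_k` (type `A`, `RootSystemData.interval_of_root`), and only the
`a` of them with `p ≤ a` can change sign, so `ℓ(v_k)` grows by at most `a`.  The asserted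
lexicographic inequality thus holds coordinate by coordinate.
-/

open scoped BigOperators

/-- A reduced crystallographic root system with a fixed base `α_1, …, α_n` of simple
roots, bundled with its Weyl group `W`.  A root `γ` is recorded by its integer
coordinate vector in the basis of simple roots (so the `i`-th simple root is
`Pi.single i 1`), and `cor γ` is the coordinate vector of the coroot `γ^∨` in the
basis of simple coroots (hence `cor γ i = ⟨χ_i, γ^∨⟩` for the fundamental weights
`χ_i`).  `A i j = ⟨α_i, α_j^∨⟩` is the Cartan matrix, `σ γ` is the reflection `s_γ`
and `act` is the action of the Weyl group on the root lattice. -/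
structure RootSystemData (n : ℕ) where
  A : Fin n → Fin n → ℤ
  R : Finset (Fin n → ℤ)
  cor : (Fin n → ℤ) → (Fin n → ℤ)
  W : Type
  [grp : Group W]
  σ : (Fin n → ℤ) → W
  act : W → (Fin n → ℤ) → (Fin n → ℤ)
  simple_mem : ∀ i : Fin n, (Pi.single i 1 : Fin n → ℤ) ∈ R
  root_ne_zero : ∀ γ ∈ R, γ ≠ 0
  neg_mem : ∀ γ ∈ R, -γ ∈ R
  pos_or_neg : ∀ γ ∈ R, (∀ i, 0 ≤ γ i) ∨ (∀ i, γ i ≤ 0)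
  reduced : ∀ γ ∈ R, ∀ k : ℤ, k • γ ∈ R → k = 1 ∨ k = -1
  cor_simple : ∀ i : Fin n, cor (Pi.single i 1) = Pi.single i 1
  cor_neg : ∀ γ ∈ R, cor (-γ) = -(cor γ)
  pair_self : ∀ γ ∈ R, (∑ i, ∑ j, γ i * A i j * cor γ j) = 2
  act_one : ∀ x, act 1 x = x
  act_mul : ∀ w w' x, act (w * w') x = act w (act w' x)
  act_refl : ∀ γ ∈ R, ∀ x, act (σ γ) x = x - (∑ i, ∑ j, x i * A i j * cor γ j) • γ
  act_mem : ∀ (w : W), ∀ γ ∈ R, act w γ ∈ R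
  cor_refl : ∀ γ ∈ R, ∀ β ∈ R,
    cor (act (σ γ) β) = cor β - (∑ i, ∑ j, γ i * A i j * cor β j) • cor γ
  refl_sq : ∀ γ ∈ R, σ γ * σ γ = 1
  refl_act : ∀ (w : W), ∀ γ ∈ R, σ (act w γ) = w * σ γ * w⁻¹
  act_faithful : ∀ w w' : W, (∀ γ ∈ R, act w γ = act w' γ) → w = w'
  generated : ∀ w : W, ∃ l : List (Fin n), w = (l.map fun i => σ (Pi.single i 1)).prod

namespace RootSystemData

instance {n : ℕ} (c : RootSystemData n) : Group c.W := c.grp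

/-- the pairing `⟨x, λ⟩` between an element `x` of the root lattice (coordinates in
the basis of simple roots) and an element `λ` of the coroot lattice (coordinates in
the basis of simple coroots) -/
def pair {n : ℕ} (c : RootSystemData n) (x lam : Fin n → ℤ) : ℤ :=
  ∑ i, ∑ j, x i * c.A i j * lam j

/-- the `i`-th simple root -/
def sroot {n : ℕ} (_c : RootSystemData n) (i : Fin n) : Fin n → ℤ := Pi.single i 1

/-- the simple reflection `s_i` -/
def s {n : ℕ} (c : RootSystemData n) (i : Fin n) : c.W := c.σ (c.sroot i)

/-- `s_{α_{t+1}}` for a `0`-based natural number index `t` (`= 1` when out of range) -/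
def sN {n : ℕ} (c : RootSystemData n) (t : ℕ) : c.W := if h : t < n then c.s ⟨t, h⟩ else 1

/-- `⟨2ρ, λ⟩ = Σ_{β ∈ R^+} ⟨β, λ⟩`, where `ρ` is the half-sum of the positive roots -/
def pairTwoRho {n : ℕ} (c : RootSystemData n) (lam : Fin n → ℤ) : ℤ :=
  ∑ β ∈ c.R, if ∀ i, 0 ≤ β i then c.pair β lam else 0

/-- the length of `w ∈ W` with respect to the simple reflections -/
noncomputable def len {n : ℕ} (c : RootSystemData n) (w : c.W) : ℕ :=
  sInf {k | ∃ l : List (Fin n), l.length = k ∧ (l.map c.s).prod = w}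

/-- the parabolic subgroup `W_S` generated by the simple reflections indexed by `S` -/
def Wsub {n : ℕ} (c : RootSystemData n) (S : Finset (Fin n)) : Subgroup c.W :=
  Subgroup.closure (c.s '' ↑S)

/-- `w ∈ W_T^S`: `w ∈ W_T` and `w` has minimal length in the coset `w W_S` -/
def MinRep {n : ℕ} (c : RootSystemData n) (T S : Finset (Fin n)) (w : c.W) : Prop :=
  w ∈ c.Wsub T ∧ ∀ u ∈ c.Wsub S, c.len w ≤ c.len (w * u)

/-- `w` is the longest element of `W_S` -/
def IsLongest {n : ℕ} (c : RootSystemData n) (S : Finset (Fin n)) (w : c.W) : Prop :=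
  w ∈ c.Wsub S ∧ ∀ v ∈ c.Wsub S, c.len v ≤ c.len w

end RootSystemData

/-- the support of `γ` is contained in `S`, i.e. `γ` lies in the span of
`{α_i : i ∈ S}` (for a root `γ`, membership in `R_S`) -/
def suppIn {n : ℕ} (S : Finset (Fin n)) (γ : Fin n → ℤ) : Prop :=
  ∀ i, i ∉ S → γ i = 0

/-- `Δ_j` for `0 ≤ j ≤ r+1`: the index set of the first `j` simple roots for `j ≤ r`,
and all of `Δ` for `j = r+1`.  (Indices of simple roots are `0`-based, so
`α_1, …, α_j` correspond to the indices `0, …, j-1`.) -/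
def deltaSet (n r j : ℕ) : Finset (Fin n) :=
  if j = r + 1 then Finset.univ else Finset.univ.filter fun i => (i : ℕ) < j

namespace RootSystemData

/-- `v 0, …, v r` (standing for `v_1, …, v_{r+1}`) is the decomposition of `w`
associated to `(Δ_P, Υ)`:  each `v_i ∈ W_{Δ_i}^{Δ_{i-1}}` and `w = v_{r+1} v_r ⋯ v_1`. -/
def IsDecomp {n : ℕ} (c : RootSystemData n) (r : ℕ) (w : c.W)
    (v : Fin (r + 1) → c.W) : Prop :=
  (∀ k : Fin (r + 1), c.MinRep (deltaSet n r ((k : ℕ) + 1)) (deltaSet n r (k : ℕ)) (v k)) ∧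
    w = (List.ofFn v).reverse.prod

/-- the first `m` simple roots `α_1, …, α_m` form a path of type `A_m`:
`⟨α_i, α_j^∨⟩ = -1` if `|i-j| = 1` and `⟨α_i, α_j^∨⟩ = 0` if `|i-j| ≥ 2`. -/
def PathA {n : ℕ} (c : RootSystemData n) (m : ℕ) : Prop :=
  ∀ i j : Fin n, (i : ℕ) < m → (j : ℕ) < m →
    (((i : ℕ) + 1 = (j : ℕ) ∨ (j : ℕ) + 1 = (i : ℕ)) → c.A i j = -1) ∧
    ((i : ℕ) + 2 ≤ (j : ℕ) ∨ (j : ℕ) + 2 ≤ (i : ℕ) → c.A i j = 0)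

/-- `u_{[k,m]} = s_k s_{k+1} ⋯ s_m` (`1`-based indices; `u_{[k,m]} = 1` for `k > m`) -/
def uu {n : ℕ} (c : RootSystemData n) (k m : ℕ) : c.W :=
  ((List.range' k (m + 1 - k)).map fun t => c.sN (t - 1)).prod

/-- `u_i^{(m)} = s_{m-i+1} s_{m-i+2} ⋯ s_m` -/
def uElt {n : ℕ} (c : RootSystemData n) (i m : ℕ) : c.W := c.uu (m - i + 1) m

end RootSystemData

/-- strict lexicographic order on `Fin m → ℤ` -/
def lexLT {m : ℕ} (x y : Fin m → ℤ) : Prop :=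
  ∃ j, x j < y j ∧ ∀ k, k < j → x k = y k

/-- lexicographic order on `Fin m → ℤ` -/
def lexLE {m : ℕ} (x y : Fin m → ℤ) : Prop := x = y ∨ lexLT x y

/-- the grading `gr(q_{α_{j+1}^∨}) ∈ ℤ^{r+1}` (for the `0`-based index `j < r`), when
`Δ_P` is of type `A_r`: in `1`-based terms, `gr(q_{α_1^∨}) = 2·e_1` and
`gr(q_{α_j^∨}) = (1-j)·e_{j-1} + (1+j)·e_j` for `2 ≤ j ≤ r`. -/
def grQ (r j : ℕ) : Fin (r + 1) → ℤ := fun k =>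
  (if (k : ℕ) = j then (j : ℤ) + 2 else 0) + (if (k : ℕ) + 1 = j then -(j : ℤ) else 0)

/-- the grading `gr(q_λ)` for `λ ∈ Q_P^∨` (coordinates in simple coroots), extended
additively from the `gr(q_{α_j^∨})`, when `Δ_P` is of type `A_r` -/
def grQlam (n r : ℕ) (lam : Fin n → ℤ) : Fin (r + 1) → ℤ :=
  fun k => ∑ j, lam j * grQ r (j : ℕ) k

namespace RootSystemData

variable {n : ℕ} (c : RootSystemData n)

/-! ### Action of the Weyl group on the root lattice -/

lemma act_s (i : Fin n) (x : Fin n → ℤ) :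
    c.act (c.s i) x = x - c.pair x (Pi.single i 1) • (Pi.single i 1 : Fin n → ℤ) := by
  have h := c.act_refl _ (c.simple_mem i) x
  rw [c.cor_simple] at h
  exact h

lemma act_s_ne (i : Fin n) (x : Fin n → ℤ) (j : Fin n) (h : j ≠ i) :
    c.act (c.s i) x j = x j := by
  rw [act_s]; simp [h]

lemma pair_add (x y l : Fin n → ℤ) : c.pair (x + y) l = c.pair x l + c.pair y l := by
  simp [pair, add_mul, Finset.sum_add_distrib]

lemma pair_eq_sum (x l : Fin n → ℤ) : c.pair x l = ∑ i, x i * c.pair (c.sroot i) l := by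
  unfold pair sroot
  refine Finset.sum_congr rfl fun i _ => ?_
  have h : ∑ p, ∑ j, (Pi.single i 1 : Fin n → ℤ) p * c.A p j * l j = ∑ j, c.A i j * l j := by
    rw [Finset.sum_eq_single i]
    · simp
    · intro b _ hb
      simp [hb]
    · simp
  rw [h, Finset.mul_sum]
  exact Finset.sum_congr rfl fun j _ => mul_assoc _ _ _

lemma pair_simple (x : Fin n → ℤ) (j : Fin n) :
    c.pair x (Pi.single j 1) = ∑ i, x i * c.A i j := by
  unfold pair
  refine Finset.sum_congr rfl fun i _ => ?_
  simp [Pi.single_apply]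

lemma s_mul_s (i : Fin n) : c.s i * c.s i = 1 := c.refl_sq _ (c.simple_mem i)

lemma exists_word (w : c.W) : ∃ l : List (Fin n), (l.map c.s).prod = w := by
  obtain ⟨l, hl⟩ := c.generated w
  exact ⟨l, hl.symm⟩

/-- The action is not assumed additive, but simple reflections act additively and generate. -/
lemma act_add (w : c.W) (x y : Fin n → ℤ) : c.act w (x + y) = c.act w x + c.act w y := by
  obtain ⟨l, rfl⟩ := c.exists_word w
  induction l with
  | nil => simp [c.act_one]
  | cons i l ih =>
    simp only [List.map_cons, List.prod_cons, c.act_mul, ih, act_s, pair_add, add_smul]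
    abel

/-- The additive map of the root lattice given by `w`. -/
def actHom (w : c.W) : (Fin n → ℤ) →+ (Fin n → ℤ) :=
  AddMonoidHom.mk' (c.act w) (c.act_add w)

lemma act_neg (w : c.W) (x : Fin n → ℤ) : c.act w (-x) = -c.act w x :=
  map_neg (c.actHom w) x

lemma act_eq_sum (w : c.W) (x : Fin n → ℤ) :
    c.act w x = ∑ i, x i • c.act w (Pi.single i 1) := by
  have hx : x = ∑ i, x i • (Pi.single i 1 : Fin n → ℤ) := by
    ext j
    simp [Finset.sum_apply, Pi.single_apply]
  have h : c.actHom w x = ∑ i, x i • c.actHom w (Pi.single i 1) := by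
    conv_lhs => rw [hx]
    rw [map_sum]
    simp only [map_zsmul]
  exact h

lemma act_inv_act (w : c.W) (x : Fin n → ℤ) : c.act w⁻¹ (c.act w x) = x := by
  rw [← c.act_mul]; simp [c.act_one]

lemma act_act_inv (w : c.W) (x : Fin n → ℤ) : c.act w (c.act w⁻¹ x) = x := by
  rw [← c.act_mul]; simp [c.act_one]

lemma act_injective (w : c.W) : Function.Injective (c.act w) :=
  Function.LeftInverse.injective (c.act_inv_act w)

lemma act_s_self (i : Fin n) : c.act (c.s i) (Pi.single i 1) = -Pi.single i 1 := by
  have h := c.pair_self _ (c.simple_mem i)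
  rw [c.cor_simple] at h
  have h2 : c.pair (Pi.single i 1) (Pi.single i 1) = 2 := h
  rw [act_s, h2]
  module

/-- A root with one positive coordinate is positive. -/
lemma nonneg_of_coord {β : Fin n → ℤ} (hβ : β ∈ c.R) (i : Fin n) (hi : 0 < β i) : 0 ≤ β := by
  rcases c.pos_or_neg β hβ with h | h
  · exact h
  · exact absurd (h i) (by omega)

lemma neg_nonneg {β : Fin n → ℤ} (hβ : β ∈ c.R) (h : ¬ 0 ≤ β) : 0 ≤ -β := by
  rcases c.pos_or_neg β hβ with h' | h'
  · exact absurd h' h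
  · intro i; simpa using h' i

lemma not_nonneg_neg {β : Fin n → ℤ} (hβ : β ∈ c.R) (h : 0 ≤ β) : ¬ 0 ≤ -β := by
  intro h'
  apply c.root_ne_zero β hβ
  ext i
  have h1 := h i
  have h2 := h' i
  simp at h1 h2 ⊢
  omega

lemma single_nonneg (i : Fin n) : (0 : Fin n → ℤ) ≤ Pi.single i 1 := by
  simp

/-- A simple reflection `s_i` makes no positive root negative other than `α_i`. -/
lemma eq_simple_of_s_neg {β : Fin n → ℤ} (hβ : β ∈ c.R) (h : 0 ≤ β) (i : Fin n)
    (hn : ¬ 0 ≤ c.act (c.s i) β) : β = Pi.single i 1 := by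
  have hz : ∀ j, j ≠ i → β j = 0 := by
    intro j hj
    by_contra hne
    apply hn
    apply c.nonneg_of_coord (c.act_mem _ _ hβ) j
    rw [act_s_ne _ _ _ _ hj]
    exact lt_of_le_of_ne (h j) (Ne.symm hne)
  have he : β = β i • (Pi.single i 1 : Fin n → ℤ) := by
    ext j
    by_cases hj : j = i
    · subst hj; simp
    · simp [hz j hj, hj]
  have h1 := c.reduced _ (c.simple_mem i) (β i) (he ▸ hβ)
  have h2 := h i
  simp only [Pi.zero_apply] at h2
  rcases h1 with h1 | h1
  · rw [he, h1]; simp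
  · omega

/-! ### Length and inversions -/

lemma len_le (l : List (Fin n)) : c.len (l.map c.s).prod ≤ l.length :=
  Nat.sInf_le ⟨l, rfl, rfl⟩

lemma exists_reduced (w : c.W) :
    ∃ l : List (Fin n), l.length = c.len w ∧ (l.map c.s).prod = w := by
  have hne : {k | ∃ l : List (Fin n), l.length = k ∧ (l.map c.s).prod = w}.Nonempty := by
    obtain ⟨l, hl⟩ := c.exists_word w
    exact ⟨_, l, rfl, hl⟩
  exact Nat.sInf_mem hne

/-- The exchange condition: a word sending `α_i` to a negative root, followed by `s_i`, can be
shortened by deleting a letter. -/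
lemma exchange (i : Fin n) (l : List (Fin n))
    (h : ¬ 0 ≤ c.act (l.map c.s).prod (Pi.single i 1)) :
    ∃ l' : List (Fin n), l'.length + 1 = l.length ∧
      (l'.map c.s).prod = (l.map c.s).prod * c.s i := by
  induction l with
  | nil => simp [c.act_one] at h
  | cons j l ih =>
    by_cases hu : 0 ≤ c.act (l.map c.s).prod (Pi.single i 1)
    · refine ⟨l, by simp, ?_⟩
      simp only [List.map_cons, List.prod_cons, c.act_mul] at h ⊢
      have he := c.eq_simple_of_s_neg (c.act_mem _ _ (c.simple_mem i)) hu j h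
      have hs := c.refl_act (l.map c.s).prod _ (c.simple_mem i)
      rw [he] at hs
      have hs' : c.s j = (l.map c.s).prod * c.s i * ((l.map c.s).prod)⁻¹ := hs
      rw [hs']
      have := c.s_mul_s i
      simp [mul_assoc, this]
    · obtain ⟨l', h1, h2⟩ := ih hu
      refine ⟨j :: l', by simp [h1], ?_⟩
      simp [h2, mul_assoc]

open Classical in
/-- The set of positive roots made negative by `w`. -/
noncomputable def inv (w : c.W) : Finset (Fin n → ℤ) :=
  c.R.filter fun β => 0 ≤ β ∧ ¬ 0 ≤ c.act w β

lemma card_inv_mul_s (w : c.W) (i : Fin n) (h : 0 ≤ c.act w (Pi.single i 1)) :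
    (c.inv (w * c.s i)).card = (c.inv w).card + 1 := by
  classical
  have hss : ∀ x, c.act (c.s i) (c.act (c.s i) x) = x := by
    intro x; rw [← c.act_mul, s_mul_s, c.act_one]
  have key : c.inv (w * c.s i) = insert (Pi.single i 1) ((c.inv w).image (c.act (c.s i))) := by
    ext β
    simp only [inv, Finset.mem_filter, Finset.mem_insert, Finset.mem_image, c.act_mul]
    constructor
    · rintro ⟨hR, hp, hn⟩
      by_cases hb : β = Pi.single i 1
      · exact Or.inl hb
      · right
        refine ⟨c.act (c.s i) β, ⟨c.act_mem _ _ hR, ?_, hn⟩, hss β⟩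
        by_contra hc
        exact hb (c.eq_simple_of_s_neg hR hp i hc)
    · rintro (rfl | ⟨δ, ⟨hR, hp, hn⟩, rfl⟩)
      · refine ⟨c.simple_mem i, single_nonneg i, ?_⟩
        rw [act_s_self, act_neg]
        exact c.not_nonneg_neg (c.act_mem _ _ (c.simple_mem i)) h
      · refine ⟨c.act_mem _ _ hR, ?_, by rwa [hss]⟩
        by_contra hc
        have := c.eq_simple_of_s_neg hR hp i hc
        subst this
        exact hn h
  rw [key, Finset.card_insert_of_notMem, Finset.card_image_of_injective _ (c.act_injective _)]
  intro hmem
  simp only [inv, Finset.mem_image, Finset.mem_filter] at hmem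
  obtain ⟨δ, ⟨hR, hp, -⟩, he⟩ := hmem
  have hd : δ = -Pi.single i 1 := by rw [← hss δ, he, act_s_self]
  rw [hd] at hp
  exact c.not_nonneg_neg (c.simple_mem i) (single_nonneg i) hp

lemma card_inv_of_reduced (l : List (Fin n)) (h : c.len (l.map c.s).prod = l.length) :
    (c.inv (l.map c.s).prod).card = l.length := by
  classical
  induction l using List.reverseRecOn with
  | nil =>
    simp only [List.map_nil, List.prod_nil, List.length_nil, Finset.card_eq_zero, inv, c.act_one]
    exact Finset.filter_eq_empty_iff.2 fun β _ hc => hc.2 hc.1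
  | append_singleton l i ih =>
    have hprod : ((l ++ [i]).map c.s).prod = (l.map c.s).prod * c.s i := by simp
    rw [hprod] at h ⊢
    simp only [List.length_append, List.length_singleton] at h ⊢
    have hred : c.len (l.map c.s).prod = l.length := by
      refine le_antisymm (c.len_le l) ?_
      obtain ⟨l', h1, h2⟩ := c.exists_reduced (l.map c.s).prod
      have h3 := c.len_le (l' ++ [i])
      simp only [List.map_append, List.prod_append, h2, List.length_append] at h3
      simp at h3
      omega
    have hpos : 0 ≤ c.act (l.map c.s).prod (Pi.single i 1) := by
      by_contra hc
      obtain ⟨l', h1, h2⟩ := c.exchange i l hc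
      have h3 := c.len_le l'
      rw [h2] at h3
      omega
    rw [c.card_inv_mul_s _ _ hpos, ih hred]

lemma len_eq_card_inv (w : c.W) : c.len w = (c.inv w).card := by
  obtain ⟨l, h1, h2⟩ := c.exists_reduced w
  subst h2
  rw [c.card_inv_of_reduced l h1.symm, h1]

/-! ### Parabolic subgroups and minimal representatives -/

/-- `W_S` leaves the coordinates outside `S` unchanged. -/
lemma act_coord_of_mem {S : Finset (Fin n)} {u : c.W} (hu : u ∈ c.Wsub S) (x : Fin n → ℤ)
    (i : Fin n) (hi : i ∉ S) : c.act u x i = x i := by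
  induction hu using Subgroup.closure_induction generalizing x with
  | mem y hy =>
    obtain ⟨j, hj, rfl⟩ := hy
    exact c.act_s_ne j x i fun h => hi (h ▸ hj)
  | one => rw [c.act_one]
  | mul y z _ _ h1 h2 => rw [c.act_mul, h1, h2]
  | inv y _ h1 => rw [← h1 (c.act y⁻¹ x), act_act_inv]

lemma minRep_simple {T S : Finset (Fin n)} {v : c.W} (hv : c.MinRep T S v) (i : Fin n)
    (hi : i ∈ S) : 0 ≤ c.act v (Pi.single i 1) := by
  by_contra hc
  obtain ⟨l, h1, h2⟩ := c.exists_reduced v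
  rw [← h2] at hc
  obtain ⟨l', h3, h4⟩ := c.exchange i l hc
  have h5 := hv.2 (c.s i) (Subgroup.subset_closure ⟨i, hi, rfl⟩)
  have h6 := c.len_le l'
  rw [h4, h2] at h6
  omega

lemma minRep_nonneg {T S : Finset (Fin n)} {v : c.W} (hv : c.MinRep T S v) (x : Fin n → ℤ)
    (hx : suppIn S x) (h0 : 0 ≤ x) : 0 ≤ c.act v x := by
  rw [act_eq_sum]
  refine Finset.sum_nonneg fun i _ => ?_
  by_cases hi : i ∈ S
  · exact smul_nonneg (h0 i) (c.minRep_simple hv i hi)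
  · rw [hx i hi, zero_smul]

lemma minRep_sign {T S : Finset (Fin n)} {v : c.W} (hv : c.MinRep T S v) {β : Fin n → ℤ}
    (hβ : β ∈ c.R) (hs : suppIn S β) : 0 ≤ c.act v β ↔ 0 ≤ β := by
  constructor
  · intro h
    by_contra hc
    have h1 := c.minRep_nonneg hv (-β) (fun i hi => by simp [hs i hi]) (c.neg_nonneg hβ hc)
    rw [act_neg] at h1
    exact c.not_nonneg_neg (c.act_mem _ _ hβ) h h1
  · exact c.minRep_nonneg hv β hs

lemma suppIn_act {S : Finset (Fin n)} {u : c.W} (hu : u ∈ c.Wsub S) {x : Fin n → ℤ}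
    (hx : suppIn S x) : suppIn S (c.act u x) := fun i hi => by
  rw [c.act_coord_of_mem hu x i hi, hx i hi]

lemma deltaSet_mono (r j : ℕ) (hj : j ≤ r) : deltaSet n r j ⊆ deltaSet n r (j + 1) := by
  intro i
  unfold deltaSet
  split_ifs <;> simp <;> omega

lemma mem_deltaSet (r j : ℕ) (hj : j ≤ r) (i : Fin n) : i ∈ deltaSet n r j ↔ (i : ℕ) < j := by
  unfold deltaSet
  rw [if_neg (by omega)]
  simp

/-! ### The components of the grading as inversion counts -/

open Classical in
/-- The positive roots supported on the indices `≤ k` and involving `α_k` (`0`-based). -/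
noncomputable def layer (k : ℕ) : Finset (Fin n → ℤ) :=
  c.R.filter fun β => 0 ≤ β ∧ (∀ i : Fin n, k < (i : ℕ) → β i = 0) ∧
    ∃ i : Fin n, (i : ℕ) = k ∧ β i ≠ 0

/-- Partial products `g j = v_j ⋯ v_1` of a decomposition. -/
lemma exists_partial {r : ℕ} (v : Fin (r + 1) → c.W) :
    ∃ g : ℕ → c.W, g 0 = 1 ∧ (∀ k : Fin (r + 1), g (k + 1) = v k * g k) ∧
      g (r + 1) = (List.ofFn v).reverse.prod := by
  refine ⟨fun j => ((List.ofFn v).take j).reverse.prod, by simp, ?_, ?_⟩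
  · intro k
    have hk : (k : ℕ) < (List.ofFn v).length := by
      rw [List.length_ofFn]; exact k.isLt
    simp only
    rw [← List.take_concat_get' _ _ hk, List.reverse_append, List.prod_append]
    congr 1
    rw [List.reverse_singleton, List.prod_singleton, List.getElem_ofFn]
  · simp only
    rw [List.take_of_length_le (by simp)]

open Classical in
/-- The components `ℓ(v_i)` of the grading count inversions of `w` layer by layer. -/
lemma len_eq_card_layer {r : ℕ} {w : c.W} {v : Fin (r + 1) → c.W} (hv : c.IsDecomp r w v)
    (k : Fin (r + 1)) (hk : (k : ℕ) < r) :
    c.len (v k) = ((c.layer k).filter fun β => ¬ 0 ≤ c.act w β).card := by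
  obtain ⟨hmin, hw⟩ := hv
  obtain ⟨g, g0, gs, gw⟩ := c.exists_partial v
  rw [← hw] at gw
  have hg : ∀ j, j ≤ r + 1 → g j ∈ c.Wsub (deltaSet n r j) := by
    intro j
    induction j with
    | zero => intro _; rw [g0]; exact one_mem _
    | succ j ih =>
      intro hj
      have h1 := gs ⟨j, by omega⟩
      simp only at h1
      rw [h1]
      exact mul_mem (hmin ⟨j, by omega⟩).1
        (Subgroup.closure_mono (Set.image_mono (by exact_mod_cast deltaSet_mono r j (by omega)))
          (ih (by omega)))
  have hmono : ∀ d, (k : ℕ) + 1 + d ≤ r + 1 →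
      deltaSet n r (k + 1) ⊆ deltaSet n r (k + 1 + d) := by
    intro d
    induction d with
    | zero => intro _; exact subset_rfl
    | succ d ih =>
      intro hd
      exact (ih (by omega)).trans (deltaSet_mono r (k + 1 + d) (by omega))
  -- Later factors do not affect signs of roots supported in `Δ_{k+1}`.
  have hsign : ∀ β ∈ c.R, suppIn (deltaSet n r (k + 1)) β → ∀ d, (k : ℕ) + 1 + d ≤ r + 1 →
      (0 ≤ c.act (g (k + 1 + d)) β ↔ 0 ≤ c.act (g (k + 1)) β) := by
    intro β hβ hs d
    induction d with
    | zero => intro _; rfl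
    | succ d ih =>
      intro hd
      rw [← ih (by omega)]
      have h1 := gs ⟨k + 1 + d, by omega⟩
      simp only at h1
      rw [← add_assoc, h1, c.act_mul]
      refine c.minRep_sign (hmin ⟨k + 1 + d, by omega⟩) (c.act_mem _ _ hβ) ?_
      exact c.suppIn_act (hg _ (by omega)) fun i hi => hs i fun h => hi (hmono d (by omega) h)
  have hsign' : ∀ β ∈ c.layer k, (0 ≤ c.act w β ↔ 0 ≤ c.act (v k) (c.act (g k) β)) := by
    intro β hβ
    simp only [layer, Finset.mem_filter] at hβ
    obtain ⟨hR, -, hs, -⟩ := hβ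
    have h1 := hsign β hR (fun i hi => hs i (by
      rw [mem_deltaSet r _ (by omega)] at hi; omega)) (r - k) (by omega)
    rw [show (k : ℕ) + 1 + (r - k) = r + 1 by omega, gw, gs k, c.act_mul] at h1
    exact h1
  have hlayer : ∀ u ∈ c.Wsub (deltaSet n r k), ∀ β ∈ c.layer k, c.act u β ∈ c.layer k := by
    intro u hu β hβ
    simp only [layer, Finset.mem_filter] at hβ ⊢
    obtain ⟨hR, hp, hs, i, hi, hne⟩ := hβ
    have hco : ∀ i : Fin n, (k : ℕ) ≤ i → c.act u β i = β i := fun i hi =>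
      c.act_coord_of_mem hu β i (by rw [mem_deltaSet r _ (by omega)]; omega)
    refine ⟨c.act_mem _ _ hR, ?_, ?_, i, hi, ?_⟩
    · apply c.nonneg_of_coord (c.act_mem _ _ hR) i
      rw [hco i hi.ge]
      exact lt_of_le_of_ne (hp i) hne.symm
    · intro j hj
      rw [hco j hj.le, hs j hj]
    · rwa [hco i hi.ge]
  have hinv : c.inv (v k) = (c.layer k).filter fun β => ¬ 0 ≤ c.act (v k) β := by
    ext β
    simp only [inv, layer, Finset.mem_filter]
    constructor
    · rintro ⟨hR, hp, hn⟩
      have hs : ∀ i : Fin n, (k : ℕ) < i → β i = 0 := by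
        intro i hi
        by_contra hne
        apply hn
        apply c.nonneg_of_coord (c.act_mem _ _ hR) i
        rw [c.act_coord_of_mem (hmin k).1 β i (by rw [mem_deltaSet r _ (by omega)]; omega)]
        exact lt_of_le_of_ne (hp i) (Ne.symm hne)
      refine ⟨⟨hR, hp, hs, ?_⟩, hn⟩
      by_contra hne
      push Not at hne
      apply hn
      refine c.minRep_nonneg (hmin k) β (fun i hi => ?_) hp
      rw [mem_deltaSet r _ (by omega)] at hi
      rcases Nat.lt_or_ge k i with h | h
      · exact hs i h
      · exact hne i (by omega)
    · rintro ⟨⟨hR, hp, -⟩, hn⟩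
      exact ⟨hR, hp, hn⟩
  rw [len_eq_card_inv, hinv]
  have hgk := hg k (by omega)
  symm
  refine Finset.card_bij (fun β _ => c.act (g k) β) ?_ ?_ ?_
  · intro β hβ
    rw [Finset.mem_filter] at hβ ⊢
    exact ⟨hlayer _ hgk _ hβ.1, by rw [← hsign' β hβ.1]; exact hβ.2⟩
  · intro β _ δ _ h
    exact c.act_injective _ h
  · intro β hβ
    rw [Finset.mem_filter] at hβ
    have hm := hlayer _ (inv_mem hgk) β hβ.1
    refine ⟨c.act (g k)⁻¹ β, ?_, c.act_act_inv _ _⟩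
    rw [Finset.mem_filter, hsign' _ hm, act_act_inv]
    exact ⟨hm, hβ.2⟩

/-! ### Roots of the type `A` part -/

/-- Coordinates extended by zero to all natural indices. -/
def ext0 (x : Fin n → ℤ) (i : ℕ) : ℤ := if h : i < n then x ⟨i, h⟩ else 0

/-- As `ext0`, shifted by one, so that index `0` stands for the missing left neighbour of `α_1`. -/
def ext1 (x : Fin n → ℤ) : ℕ → ℤ
  | 0 => 0
  | i + 1 => ext0 x i

lemma ext1_coe (x : Fin n → ℤ) (i : Fin n) : ext1 x (i + 1) = x i := by
  simp [ext1, ext0]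

lemma pair_path {r : ℕ} (hA : c.PathA r) (x : Fin n → ℤ)
    (hs : ∀ i : Fin n, r ≤ (i : ℕ) → x i = 0) (j : Fin n) (hj : (j : ℕ) < r) :
    c.pair x (Pi.single j 1) = 2 * x j - ext1 x j - ext1 x (j + 2) := by
  have hdiag : c.A j j = 2 := by
    have h := c.pair_self _ (c.simple_mem j)
    rw [c.cor_simple] at h
    have h2 : c.pair (Pi.single j 1) (Pi.single j 1) = 2 := h
    rw [pair_simple] at h2
    simpa [Pi.single_apply] using h2
  have hterm : ∀ i : Fin n, x i * c.A i j = (if i = j then 2 * x i else 0)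
      - (if (i : ℕ) + 1 = j then x i else 0) - (if (i : ℕ) = j + 1 then x i else 0) := by
    intro i
    by_cases hi : r ≤ (i : ℕ)
    · simp [hs i hi]
    · push Not at hi
      obtain ⟨h1, h2⟩ := hA i j hi hj
      rcases lt_trichotomy (i : ℕ) j with h | h | h
      · have hne : i ≠ j := fun e => by simp [e] at h
        by_cases h3 : (i : ℕ) + 1 = j
        · rw [h1 (Or.inl h3), if_neg hne, if_pos h3, if_neg (by omega)]; ring
        · rw [h2 (Or.inl (by omega)), if_neg hne, if_neg h3, if_neg (by omega)]; ring
      · have : i = j := Fin.ext h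
        subst this
        rw [hdiag, if_pos rfl, if_neg (by omega), if_neg (by omega)]; ring
      · have hne : i ≠ j := fun e => by simp [e] at h
        by_cases h3 : (i : ℕ) = j + 1
        · rw [h1 (Or.inr h3.symm), if_neg hne, if_neg (by omega), if_pos h3]; ring
        · rw [h2 (Or.inr (by omega)), if_neg hne, if_neg (by omega), if_neg h3]; ring
  have hl : ∑ i : Fin n, (if (i : ℕ) + 1 = j then x i else 0) = ext1 x j := by
    obtain ⟨j, hjn⟩ := j
    cases j with
    | zero => simp [ext1]
    | succ m =>
      rw [Finset.sum_eq_single ⟨m, by omega⟩]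
      · simp [ext1, ext0, show m < n by omega]
      · intro b _ hb
        exact if_neg fun e => hb (Fin.ext (by simpa using e))
      · simp
  have hr : ∑ i : Fin n, (if (i : ℕ) = j + 1 then x i else 0) = ext1 x (j + 2) := by
    by_cases h : (j : ℕ) + 1 < n
    · rw [Finset.sum_eq_single ⟨j + 1, h⟩]
      · simp [ext1, ext0, h]
      · intro b _ hb
        exact if_neg fun e => hb (Fin.ext e)
      · simp
    · simp only [ext1, ext0, dif_neg h]
      refine Finset.sum_eq_zero fun i _ => if_neg ?_
      omega
  rw [pair_simple, Finset.sum_congr rfl fun i _ => hterm i, Finset.sum_sub_distrib,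
    Finset.sum_sub_distrib, hl, hr]
  simp

/-- Every positive root supported on a type `A` path is the sum of the simple roots over an
interval.  If `j` is the leftmost index at which the coefficients are maximal, then
`⟨x, α_j^∨⟩ > 0`, so `s_j` lowers the height of `x`. -/
lemma interval_of_root {r : ℕ} (hA : c.PathA r) (N : ℕ) : ∀ x ∈ c.R, 0 ≤ x →
    (∀ i : Fin n, r ≤ (i : ℕ) → x i = 0) → ∑ i, x i ≤ N →
    ∃ p q : ℕ, p ≤ q ∧ ∀ i : Fin n, x i = if p ≤ (i : ℕ) ∧ (i : ℕ) ≤ q then 1 else 0 := by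
  induction N with
  | zero =>
    intro x hR hp _ hN
    exfalso
    apply c.root_ne_zero x hR
    have h0 : ∑ i, x i = 0 := le_antisymm (by simpa using hN) (Finset.sum_nonneg fun i _ => hp i)
    ext i
    exact (Finset.sum_eq_zero_iff_of_nonneg fun i _ => hp i).1 h0 i (Finset.mem_univ i)
  | succ N ih =>
    intro x hR hp hs hN
    have hx0 := c.root_ne_zero x hR
    obtain ⟨i0, hi0⟩ := Function.ne_iff.1 hx0
    have hne : (Finset.univ : Finset (Fin n)).Nonempty := ⟨i0, Finset.mem_univ _⟩
    obtain ⟨m, -, hm⟩ := Finset.exists_max_image Finset.univ x hne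
    obtain ⟨j, hjm, hjmin⟩ := WellFounded.has_min (wellFounded_lt (α := Fin n))
      {i | x i = x m} ⟨m, rfl⟩
    have hjmax : ∀ i, x i ≤ x j := fun i => by
      rw [show x j = x m from hjm]; exact hm i (Finset.mem_univ i)
    have hjlt : ∀ i, i < j → x i < x j := fun i hi =>
      lt_of_le_of_ne (hjmax i) fun e => hjmin i (e.trans hjm) hi
    have hjpos : 0 < x j := lt_of_lt_of_le (lt_of_le_of_ne (hp i0) (Ne.symm hi0)) (hjmax i0)
    have hjr : (j : ℕ) < r := by
      by_contra h
      rw [hs j (by omega)] at hjpos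
      omega
    have hleft : ext1 x j < x j := by
      obtain ⟨j, hjn⟩ := j
      cases j with
      | zero => simpa [ext1] using hjpos
      | succ t =>
        have := hjlt ⟨t, by omega⟩ (by simp)
        simpa [ext1, ext0, show t < n by omega] using this
    have hright : ext1 x (j + 2) ≤ x j := by
      simp only [ext1, ext0]
      split_ifs with h
      · exact hjmax _
      · exact hjpos.le
    have hpair := c.pair_path hA x hs j hjr
    set y := c.act (c.s j) x with hy
    have hyR : y ∈ c.R := c.act_mem _ _ hR
    have hyj : y j = x j - c.pair x (Pi.single j 1) := by
      rw [hy, act_s]; simp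
    have hyi : ∀ i, i ≠ j → y i = x i := fun i hi => c.act_s_ne j x i hi
    by_cases hyp : 0 ≤ y
    · have hsum : ∑ i, y i < ∑ i, x i := by
        refine Finset.sum_lt_sum (fun i _ => ?_) ⟨j, Finset.mem_univ _, ?_⟩
        · by_cases h : i = j
          · subst h; omega
          · rw [hyi i h]
        · omega
      obtain ⟨p, q, hpq, hform⟩ := ih y hyR hyp (fun i hi => by
        rw [hyi i (fun e => by subst e; omega), hs i hi]) (by push_cast at hN; omega)
      -- The neighbours of `j` in `x` and in `y` agree.
      have hleft' : ext1 x j = if 1 ≤ (j : ℕ) ∧ p + 1 ≤ (j : ℕ) ∧ (j : ℕ) ≤ q + 1 then 1 else 0 := by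
        obtain ⟨j, hjn⟩ := j
        cases j with
        | zero => simp [ext1]
        | succ t =>
          have h1 := hyi ⟨t, by omega⟩ (by simp)
          have h2 := hform ⟨t, by omega⟩
          simp only [ext1, ext0, show t < n by omega, dif_pos]
          rw [← h1, h2]
          simp
      have hright' : ext1 x (j + 2) = if (j : ℕ) + 1 < n ∧ p ≤ (j : ℕ) + 1 ∧ (j : ℕ) + 1 ≤ q
          then 1 else 0 := by
        simp only [ext1, ext0]
        split_ifs with h h' h'
        · rw [← hyi _ (by simp [Fin.ext_iff]), hform, if_pos (by simpa using h'.2)]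
        · rw [← hyi _ (by simp [Fin.ext_iff]), hform, if_neg (by simpa [h] using h')]
        · omega
        · rfl
      have hformj := hform j
      have hcase : ((j : ℕ) = q + 1 ∨ (j : ℕ) + 1 = p) ∧ x j = 1 := by
        rw [hleft', hright'] at hpair
        split_ifs at hpair hformj <;> omega
      obtain ⟨hc | hc, hxj⟩ := hcase
      · refine ⟨p, q + 1, by omega, fun i => ?_⟩
        by_cases h : i = j
        · subst h; rw [hxj, if_pos (by omega)]
        · have h' : (i : ℕ) ≠ j := fun e => h (Fin.ext e)
          rw [← hyi i h, hform i]
          refine if_congr ?_ rfl rfl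
          omega
      · refine ⟨p - 1, q, by omega, fun i => ?_⟩
        by_cases h : i = j
        · subst h; rw [hxj, if_pos (by omega)]
        · have h' : (i : ℕ) ≠ j := fun e => h (Fin.ext e)
          rw [← hyi i h, hform i]
          refine if_congr ?_ rfl rfl
          omega
    · have := c.eq_simple_of_s_neg hR hp j hyp
      refine ⟨j, j, le_rfl, fun i => ?_⟩
      rw [this, Pi.single_apply]
      refine if_congr ?_ rfl rfl
      rw [Fin.ext_iff]
      omega

open Classical in
/-- At most `b + 1` roots of a layer involve `α_b` (`0`-based): they are `α_p + ⋯ + α_k` with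
`p ≤ b`. -/
lemma card_layer_involving {r : ℕ} (hA : c.PathA r) (k : ℕ) (hk : k < r) (b : Fin n) :
    ((c.layer k).filter fun β => β b ≠ 0).card ≤ b + 1 := by
  have hint : ∀ β ∈ (c.layer k).filter (fun β => β b ≠ 0),
      ∃ p ∈ Finset.range (b + 1), β = fun i : Fin n => if p ≤ (i : ℕ) ∧ (i : ℕ) ≤ k then 1 else 0 := by
    intro β hβ
    simp only [layer, Finset.mem_filter] at hβ
    obtain ⟨⟨hR, hp, hs, i, hi, hne⟩, hbne⟩ := hβ
    obtain ⟨p, q, hpq, hform⟩ := c.interval_of_root hA (∑ i, β i).toNat β hR hp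
      (fun i hi => hs i (by omega)) (Int.self_le_toNat _)
    have hb' := hform b
    have hi' := hform i
    have hpb : p ≤ b := by
      by_contra h
      rw [if_neg (by omega)] at hb'
      exact hbne hb'
    have hkq : k ≤ q := by
      by_contra h
      rw [if_neg (by omega)] at hi'
      exact hne hi'
    refine ⟨p, by simp; omega, funext fun t => ?_⟩
    by_cases ht : (t : ℕ) ≤ k
    · rw [hform t]
      exact if_congr (by omega) rfl rfl
    · rw [hs t (by omega), if_neg (by omega)]
  calc _ ≤ ((Finset.range (b + 1)).image fun p => fun i : Fin n =>
        if p ≤ (i : ℕ) ∧ (i : ℕ) ≤ k then (1 : ℤ) else 0).card := by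
        refine Finset.card_le_card fun β hβ => ?_
        obtain ⟨p, hp, he⟩ := hint β hβ
        exact Finset.mem_image.2 ⟨p, hp, he.symm⟩
    _ ≤ (Finset.range (b + 1)).card := Finset.card_image_le
    _ = b + 1 := by simp

end RootSystemData

lemma lexLE_of_le {m : ℕ} (x y : Fin m → ℤ) (h : ∀ k, x k ≤ y k) : lexLE x y := by
  by_cases he : x = y
  · exact Or.inl he
  · right
    obtain ⟨i, hi⟩ := Function.ne_iff.1 he
    obtain ⟨j, hj, hmin⟩ := WellFounded.has_min (wellFounded_lt (α := Fin m)) {i | x i ≠ y i} ⟨i, hi⟩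
    exact ⟨j, lt_of_le_of_ne (h j) hj, fun k hk => by
      by_contra hne
      exact hmin k hne hk⟩

/-- Let `1 ≤ a ≤ r` and let `γ ∈ R^+` satisfy `⟨α, γ^∨⟩ = 0` for all
`α ∈ Δ_P \ {α_a}`.  Then for any `w ∈ W`, `gr_{a-1}(w s_γ) = gr_{a-1}(w)` and
`gr_r(w s_γ) ≤ gr_r(w) + Σ_{k=a}^r a·e_k` in the lexicographic order on `ℤ^r`. -/
theorem gr_comparison_perp_coroot {n : ℕ} (c : RootSystemData n)
    (r : ℕ) (hr1 : 1 ≤ r) (hrn : r < n) (hA : c.PathA r)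
    (a : ℕ) (ha1 : 1 ≤ a) (har : a ≤ r)
    (γ : Fin n → ℤ) (hγR : γ ∈ c.R) (hγpos : ∀ i, 0 ≤ γ i)
    (hperp : ∀ i : Fin n, (i : ℕ) < r → (i : ℕ) ≠ a - 1 →
      c.pair (c.sroot i) (c.cor γ) = 0)
    (w : c.W) (v v' : Fin (r + 1) → c.W)
    (hv : c.IsDecomp r w v) (hv' : c.IsDecomp r (w * c.σ γ) v') :
    (∀ k : Fin (r + 1), (k : ℕ) < a - 1 → c.len (v' k) = c.len (v k)) ∧
    lexLE (fun k : Fin r => (c.len (v' k.castSucc) : ℤ))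
      (fun k : Fin r => (c.len (v k.castSucc) : ℤ) +
        if a - 1 ≤ (k : ℕ) then (a : ℤ) else 0) := by
  classical
  set b : Fin n := ⟨a - 1, by omega⟩ with hb
  -- `s_γ` fixes every root of a layer `k < r` whose coefficient at `α_a` vanishes.
  have hfix : ∀ k : ℕ, k < r → ∀ β ∈ c.layer k, β b = 0 →
      c.act (w * c.σ γ) β = c.act w β := by
    intro k hk β hβ h0
    simp only [RootSystemData.layer, Finset.mem_filter] at hβ
    obtain ⟨hR, hp, hs, -⟩ := hβ
    have hz : c.pair β (c.cor γ) = 0 := by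
      rw [c.pair_eq_sum]
      refine Finset.sum_eq_zero fun i _ => ?_
      by_cases hi : (i : ℕ) < r
      · by_cases hia : (i : ℕ) = a - 1
        · rw [show i = b from Fin.ext hia, h0, zero_mul]
        · rw [hperp i hi hia, mul_zero]
      · rw [hs i (by omega), zero_mul]
    have h1 : c.act (c.σ γ) β = β - c.pair β (c.cor γ) • γ := c.act_refl γ hγR β
    rw [c.act_mul, h1, hz, zero_smul, sub_zero]
  have hlow : ∀ k : Fin (r + 1), (k : ℕ) < a - 1 → c.len (v' k) = c.len (v k) := by
    intro k hk
    rw [c.len_eq_card_layer hv k (by omega), c.len_eq_card_layer hv' k (by omega)]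
    congr 1
    refine Finset.filter_congr fun β hβ => ?_
    rw [hfix k (by omega) β hβ]
    simp only [RootSystemData.layer, Finset.mem_filter] at hβ
    exact hβ.2.2.1 b hk
  refine ⟨hlow, lexLE_of_le _ _ fun k => ?_⟩
  split_ifs with hk
  · rw [c.len_eq_card_layer hv k.castSucc (by simp), c.len_eq_card_layer hv' k.castSucc (by simp)]
    have h1 := c.card_layer_involving hA k k.isLt b
    have h2 : ((c.layer k).filter fun β => ¬ 0 ≤ c.act (w * c.σ γ) β) ⊆
        ((c.layer k).filter fun β => ¬ 0 ≤ c.act w β) ∪ (c.layer k).filter fun β => β b ≠ 0 := by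
      intro β hβ
      rw [Finset.mem_filter] at hβ
      rw [Finset.mem_union, Finset.mem_filter, Finset.mem_filter]
      by_cases h0 : β b = 0
      · rw [hfix k k.isLt β hβ.1 h0] at hβ
        exact Or.inl hβ
      · exact Or.inr ⟨hβ.1, h0⟩
    have h3 := (Finset.card_le_card h2).trans (Finset.card_union_le _ _)
    have h4 : (b : ℕ) + 1 = a := by simp only [hb]; omega
    rw [h4] at h1
    simp only [Fin.val_castSucc]
    omega
  · have := hlow k.castSucc (by simp only [Fin.val_castSucc]; omega)
    rw [this, add_zero]
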